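/- For supercritical Bernoulli site percolation on Z^2 with parameter p ≥ 8/9, the expected size of the connected component G of the complement of the infinite open cluster containing the origin satisfies E|G| ≤ α(1−p) for some universal constant α > 0. -/

import Mathlib

open MeasureTheory

noncomputable section

/-- Nearest-neighbor (`l¹`) adjacency on `ℤ²`. -/
def adj2 (a b : ℤ × ℤ) : Prop := |a.1 - b.1| + |a.2 - b.2| = 1

/-- Connectivity of `a` and `b` by a nearest-neighbor path inside the set `A`. -/
def ConnIn (A : Set (ℤ × ℤ)) (a b : ℤ × ℤ) : Prop :=
  Relation.ReflTransGen (fun u v => u ∈ A ∧ v ∈ A ∧ adj2 u v) a b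

/-- The union of the infinite open clusters of the configuration `ω`
(`ω x = true` meaning `x` open); a.s. there is a unique such cluster in the
supercritical regime. -/
def InfCluster (ω : (ℤ × ℤ) → Bool) : Set (ℤ × ℤ) :=
  {x | ω x = true ∧ {y | ConnIn {z | ω z = true} x y}.Infinite}

/-- The connected component of the complement of the infinite cluster
containing the origin (empty if the origin lies in the infinite cluster). -/
def CompOfOrigin (ω : (ℤ × ℤ) → Bool) : Set (ℤ × ℤ) :=
  {y | (0, 0) ∉ InfCluster ω ∧ ConnIn (InfCluster ω)ᶜ (0, 0) y}

/-- Sup norm on `ℤ²` as a natural number. -/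
def nrm (x : ℤ × ℤ) : ℕ := max x.1.natAbs x.2.natAbs

/-- the star-graph of closed sites -/
def cGraph (ω : (ℤ × ℤ) → Bool) : SimpleGraph (ℤ × ℤ) where
  Adj a b := a ≠ b ∧ |a.1 - b.1| ≤ 1 ∧ |a.2 - b.2| ≤ 1 ∧ ω a = false ∧ ω b = false
  symm := ⟨fun a b h => ⟨h.1.symm, by rw [abs_sub_comm]; exact h.2.1,
    by rw [abs_sub_comm]; exact h.2.2.1, h.2.2.2.2, h.2.2.2.1⟩⟩
  loopless := ⟨fun a h => h.1 rfl⟩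

/-- the eight steps -/
def stepSet : Finset (ℤ × ℤ) := ((Finset.Icc (-1) 1) ×ˢ (Finset.Icc (-1) 1)).erase (0, 0)

lemma stepSet_card : stepSet.card = 8 := by decide

/-- star-walks with `n` steps from `x`, as lists -/
def walks : (ℤ × ℤ) → ℕ → Finset (List (ℤ × ℤ))
  | x, 0 => {[x]}
  | x, n + 1 => stepSet.biUnion (fun d => (walks (x + d) n).image (fun l => x :: l))

lemma walks_card (n : ℕ) : ∀ x, (walks x n).card ≤ 8 ^ n := by
  induction n with
  | zero => intro x; simp [walks]
  | succ n ih =>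
    intro x
    rw [walks]
    have := Finset.card_biUnion_le_card_mul stepSet
      (fun d => (walks (x + d) n).image (fun l => x :: l)) (8 ^ n)
      (fun d _ => Finset.card_image_le.trans (ih _))
    rw [stepSet_card] at this
    rw [pow_succ]; omega

lemma walks_length (n : ℕ) : ∀ x, ∀ l ∈ walks x n, l.length = n + 1 := by
  induction n with
  | zero => intro x; simp [walks]
  | succ n ih =>
    intro x l hl
    simp only [walks, Finset.mem_biUnion, Finset.mem_image] at hl
    obtain ⟨d, _, l', hl', rfl⟩ := hl
    simp [ih _ _ hl']

lemma support_mem_walks {ω : (ℤ × ℤ) → Bool} {x y : ℤ × ℤ} (p : (cGraph ω).Walk x y) :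
    p.support ∈ walks x p.length := by
  induction p with
  | nil => simp [walks]
  | @cons u v w h p ih =>
    simp only [SimpleGraph.Walk.support_cons, SimpleGraph.Walk.length_cons, walks,
      Finset.mem_biUnion, Finset.mem_image]
    refine ⟨v - u, ?_, p.support, ?_, rfl⟩
    · obtain ⟨h1, h2, h3, -⟩ := h
      rw [abs_le] at h2 h3
      simp only [stepSet, Finset.mem_erase, Finset.mem_product, Finset.mem_Icc, ne_eq,
        Prod.ext_iff, Prod.fst_sub, Prod.snd_sub] at *
      omega
    · rw [add_sub_cancel]; exact ih

lemma support_closed {ω : (ℤ × ℤ) → Bool} {x y : ℤ × ℤ} (hx : ω x = false)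
    (p : (cGraph ω).Walk x y) : ∀ z ∈ p.support, ω z = false := by
  induction p with
  | nil => simpa using hx
  | cons h p ih =>
    intro z hz
    rw [SimpleGraph.Walk.support_cons, List.mem_cons] at hz
    rcases hz with rfl | hz
    · exact hx
    · exact ih h.2.2.2.2 z hz

lemma length_ge {ω : (ℤ × ℤ) → Bool} {x y : ℤ × ℤ}
    (p : (cGraph ω).Walk x y) : nrm (y - x) ≤ p.length := by
  induction p with
  | nil => simp [nrm]
  | cons h p ih =>
    rw [SimpleGraph.Walk.length_cons]
    have h2 := h.2.1
    have h3 := h.2.2.1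
    clear h
    rw [abs_le] at h2 h3
    simp only [nrm, Prod.fst_sub, Prod.snd_sub] at *
    omega

/-- The event that `x` starts a closed self-avoiding star-path with `nrm x` steps. -/
def Ev (x : ℤ × ℤ) : Set ((ℤ × ℤ) → Bool) :=
  ⋃ l ∈ (walks x (nrm x)).filter List.Nodup, {ω | ∀ y ∈ l.toFinset, ω y = false}

lemma mem_Ev {ω : (ℤ × ℤ) → Bool} {x y : ℤ × ℤ} (hx : ω x = false)
    (h : (cGraph ω).Reachable x y) (hd : nrm x ≤ nrm (y - x)) : ω ∈ Ev x := by
  obtain ⟨p, hp⟩ := h.exists_isPath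
  have hl := length_ge p
  have hq : (p.take (nrm x)).IsPath := hp.take _
  have hlen : (p.take (nrm x)).length = nrm x := by
    rw [SimpleGraph.Walk.take_length]; omega
  simp only [Ev, Set.mem_iUnion]
  refine ⟨(p.take (nrm x)).support, ?_, ?_⟩
  · rw [Finset.mem_filter]
    refine ⟨?_, hq.support_nodup⟩
    have := support_mem_walks (p.take (nrm x))
    rwa [hlen] at this
  · intro z hz
    exact support_closed hx _ z (by simpa using hz)

lemma measurable_cyl (F : Finset (ℤ × ℤ)) :
    MeasurableSet {ω : (ℤ × ℤ) → Bool | ∀ y ∈ F, ω y = false} := by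
  have : {ω : (ℤ × ℤ) → Bool | ∀ y ∈ F, ω y = false} = ⋂ y ∈ F, (fun ω => ω y) ⁻¹' {false} := by
    ext; simp
  rw [this]
  exact F.measurableSet_biInter (fun y _ => (measurable_pi_apply y) (measurableSet_singleton _))

lemma measurable_Ev (x : ℤ × ℤ) : MeasurableSet (Ev x) :=
  Finset.measurableSet_biUnion _ (fun l _ => measurable_cyl _)

lemma measure_Ev {p : ℝ} (μ : Measure ((ℤ × ℤ) → Bool))
    (hμ : ∀ (F : Finset (ℤ × ℤ)) (b : (ℤ × ℤ) → Bool),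
            μ {ω | ∀ x ∈ F, ω x = b x} =
              ENNReal.ofReal (∏ x ∈ F, if b x then p else 1 - p)) (x : ℤ × ℤ) :
    μ (Ev x) ≤ ENNReal.ofReal (8 ^ nrm x * (1 - p) ^ (nrm x + 1)) := by
  have h1 : ∀ l ∈ (walks x (nrm x)).filter List.Nodup,
      μ {ω | ∀ y ∈ l.toFinset, ω y = false} = ENNReal.ofReal ((1 - p) ^ (nrm x + 1)) := by
    intro l hl
    rw [Finset.mem_filter] at hl
    rw [hμ l.toFinset (fun _ => false)]
    simp [List.toFinset_card_of_nodup hl.2, walks_length _ _ _ hl.1]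
  calc μ (Ev x) ≤ ∑ l ∈ (walks x (nrm x)).filter List.Nodup,
        μ {ω | ∀ y ∈ l.toFinset, ω y = false} := measure_biUnion_finset_le _ _
    _ = ∑ l ∈ (walks x (nrm x)).filter List.Nodup, ENNReal.ofReal ((1 - p) ^ (nrm x + 1)) :=
        Finset.sum_congr rfl h1
    _ = ((walks x (nrm x)).filter List.Nodup).card * ENNReal.ofReal ((1 - p) ^ (nrm x + 1)) := by
        simp
    _ ≤ ((8 ^ nrm x : ℕ) : ENNReal) * ENNReal.ofReal ((1 - p) ^ (nrm x + 1)) := by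
        gcongr
        exact (Finset.card_filter_le _ _).trans (walks_card _ _)
    _ = _ := by
        rw [ENNReal.ofReal_mul (by positivity), ENNReal.ofReal_pow (by norm_num : (0:ℝ) ≤ 8)]
        push_cast
        norm_num

/-- one-dimensional weight -/
def wt (n : ℤ) : ℝ := (2 * (n.natAbs : ℝ) + 1) ^ 2 * (19 / 20) ^ n.natAbs

lemma wt_nonneg (n : ℤ) : 0 ≤ wt n := by unfold wt; positivity

lemma summable_wt : Summable wt := by
  have h : Summable (fun n : ℕ => (2 * (n : ℝ) + 1) ^ 2 * (19 / 20 : ℝ) ^ n) := by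
    have h2 := summable_pow_mul_geometric_of_norm_lt_one (R := ℝ) 2 (r := 19 / 20)
      (by rw [Real.norm_eq_abs]; norm_num [abs_lt])
    have h1 := summable_pow_mul_geometric_of_norm_lt_one (R := ℝ) 1 (r := 19 / 20)
      (by rw [Real.norm_eq_abs]; norm_num [abs_lt])
    have h0 := summable_pow_mul_geometric_of_norm_lt_one (R := ℝ) 0 (r := 19 / 20)
      (by rw [Real.norm_eq_abs]; norm_num [abs_lt])
    refine (((h2.mul_left 4).add (h1.mul_left 4)).add h0).congr ?_
    intro n; ring
  apply Summable.of_nat_of_neg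
  · simpa [wt] using h
  · simpa [wt] using h

lemma wt_bound (x : ℤ × ℤ) :
    (2 * (nrm x : ℝ) + 1) ^ 2 * (8 / 9 : ℝ) ^ nrm x ≤ wt x.1 * wt x.2 := by
  obtain ⟨a, b⟩ := x
  have e : nrm (a, b) = max a.natAbs b.natAbs := rfl
  simp only [wt]
  rw [e]
  generalize a.natAbs = m
  generalize b.natAbs = n
  have h1 : (2 * ((max m n : ℕ) : ℝ) + 1) ≤ (2 * (m : ℝ) + 1) * (2 * (n : ℝ) + 1) := by
    have hm : (0:ℝ) ≤ m := by positivity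
    have hn : (0:ℝ) ≤ n := by positivity
    have : 0 ≤ (m : ℝ) * n := by positivity
    rcases max_choice m n with h | h <;> rw [h] <;> nlinarith
  have h2 : (8 / 9 : ℝ) ^ (max m n) ≤ (19 / 20) ^ m * (19 / 20) ^ n := by
    calc (8 / 9 : ℝ) ^ (max m n) ≤ ((19 / 20) ^ 2) ^ (max m n) := by gcongr; norm_num
      _ = (19 / 20) ^ (2 * max m n) := by rw [pow_mul]
      _ ≤ (19 / 20) ^ (m + n) := by
        apply pow_le_pow_of_le_one (by norm_num) (by norm_num); omega
      _ = _ := pow_add _ _ _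
  calc _ ≤ ((2 * (m : ℝ) + 1) * (2 * (n : ℝ) + 1)) ^ 2 * ((19 / 20) ^ m * (19 / 20) ^ n) := by
        gcongr
    _ = _ := by ring

/-- The dominating random variable. -/
def Nn (ω : (ℤ × ℤ) → Bool) : ENNReal :=
  ∑' x, (Ev x).indicator (fun _ => (((2 * nrm x + 1) ^ 2 : ℕ) : ENNReal)) ω

lemma lintegral_Nn {p : ℝ} (hp0 : 8 / 9 ≤ p) (hp : p ≤ 1) (μ : Measure ((ℤ × ℤ) → Bool))
    (hμ : ∀ (F : Finset (ℤ × ℤ)) (b : (ℤ × ℤ) → Bool),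
            μ {ω | ∀ x ∈ F, ω x = b x} =
              ENNReal.ofReal (∏ x ∈ F, if b x then p else 1 - p)) :
    ∫⁻ ω, Nn ω ∂μ ≤ ENNReal.ofReal ((∑' x : ℤ × ℤ, wt x.1 * wt x.2) * (1 - p)) := by
  have hs : Summable (fun x : ℤ × ℤ => wt x.1 * wt x.2) :=
    summable_wt.mul_of_nonneg summable_wt wt_nonneg wt_nonneg
  have hq : 0 ≤ 1 - p := by linarith
  unfold Nn
  rw [lintegral_tsum (fun x => (measurable_const.indicator (measurable_Ev x)).aemeasurable)]
  rw [← tsum_mul_right, ENNReal.ofReal_tsum_of_nonneg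
    (fun x => mul_nonneg (mul_nonneg (wt_nonneg _) (wt_nonneg _)) hq) (hs.mul_right _)]
  refine ENNReal.tsum_le_tsum (fun x => ?_)
  rw [lintegral_indicator_const (measurable_Ev x)]
  calc _ ≤ (((2 * nrm x + 1) ^ 2 : ℕ) : ENNReal) *
        ENNReal.ofReal (8 ^ nrm x * (1 - p) ^ (nrm x + 1)) := by
        gcongr; exact measure_Ev μ hμ x
    _ = ENNReal.ofReal ((2 * (nrm x : ℝ) + 1) ^ 2 * (8 ^ nrm x * (1 - p) ^ (nrm x + 1))) := by
        rw [ENNReal.ofReal_mul (p := (2 * (nrm x : ℝ) + 1) ^ 2) (by positivity),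
          ← ENNReal.ofReal_natCast]
        push_cast; rfl
    _ ≤ _ := by
        apply ENNReal.ofReal_le_ofReal
        calc _ = (2 * (nrm x : ℝ) + 1) ^ 2 * (8 * (1 - p)) ^ nrm x * (1 - p) := by
              rw [mul_pow, pow_succ]; ring
          _ ≤ (2 * (nrm x : ℝ) + 1) ^ 2 * (8 / 9) ^ nrm x * (1 - p) := by
              gcongr; linarith
          _ ≤ _ := mul_le_mul_of_nonneg_right (wt_bound x) hq

lemma exists_primitive (g : ℤ → ℤ) : ∃ F : ℤ → ℤ, F 0 = 0 ∧ ∀ n, F (n + 1) - F n = g n := by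
  refine ⟨fun n => if 0 ≤ n then ∑ i ∈ Finset.range n.toNat, g i
    else -∑ i ∈ Finset.range (-n).toNat, g (-(i : ℤ) - 1), by simp, fun n => ?_⟩
  dsimp only
  rcases lt_trichotomy n (-1) with h | h | h
  · rw [if_neg (by omega), if_neg (by omega)]
    have e : (-n).toNat = (-(n + 1)).toNat + 1 := by omega
    rw [e, Finset.sum_range_succ]
    have : (-((-(n + 1)).toNat : ℤ) - 1) = n := by omega
    rw [this]; ring
  · subst h; simp
  · rw [if_pos (by omega), if_pos (by omega)]
    have e : (n + 1).toNat = n.toNat + 1 := by omega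
    rw [e, Finset.sum_range_succ]
    have : ((n.toNat : ℕ) : ℤ) = n := by omega
    rw [this]; ring

lemma exists_potential (h v : ℤ → ℤ → ℤ)
    (hv : ∀ x y, h x y + v (x + 1) y = v x y + h x (y + 1)) :
    ∃ f : ℤ → ℤ → ℤ, (∀ x y, f (x + 1) y - f x y = h x y) ∧
      (∀ x y, f x (y + 1) - f x y = v x y) := by
  obtain ⟨H, -, hH⟩ := exists_primitive (fun x => h x 0)
  choose V hV0 hV using fun x => exists_primitive (v x)
  refine ⟨fun x y => H x + V x y, fun x y => ?_, fun x y => ?_⟩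
  · dsimp only
    induction y using Int.induction_on with
    | zero => rw [hV0, hV0]; linarith [hH x]
    | succ i ih => linarith [hV x i, hV (x + 1) i, hv x i]
    | pred i ih =>
      have h1 := hV x (-i - 1)
      have h2 := hV (x + 1) (-i - 1)
      have h3 := hv x (-i - 1)
      rw [sub_add_cancel] at h1 h2 h3
      linarith
  · dsimp only; linarith [hV x y]

lemma adj2_symm {a b : ℤ × ℤ} (h : adj2 a b) : adj2 b a := by
  unfold adj2 at *; rw [abs_sub_comm b.1, abs_sub_comm b.2]; exact h

lemma adj2_cases {a b : ℤ × ℤ} (h : adj2 a b) :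
    b = (a.1 + 1, a.2) ∨ b = (a.1 - 1, a.2) ∨ b = (a.1, a.2 + 1) ∨ b = (a.1, a.2 - 1) := by
  unfold adj2 at h
  simp only [Prod.ext_iff]
  rcases abs_cases (a.1 - b.1) with h1 | h1 <;> rcases abs_cases (a.2 - b.2) with h2 | h2 <;> omega

lemma adj2_right (x y : ℤ) : adj2 (x, y) (x + 1, y) := by simp [adj2]
lemma adj2_up (x y : ℤ) : adj2 (x, y) (x, y + 1) := by simp [adj2]

/-- close in the star sense -/
def near (a b : ℤ × ℤ) : Prop := |a.1 - b.1| ≤ 1 ∧ |a.2 - b.2| ≤ 1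

open Classical in
/-- All boundary edges carry the same label. -/
lemma topo (D A L K : Set (ℤ × ℤ)) (hD : ∀ u ∈ D, ∀ v ∈ D, ConnIn D u v)
    (hA : ∀ u ∈ A, ∀ v ∈ A, ConnIn A u v) (hdis : ∀ u ∈ D, u ∉ A)
    (hb : ∀ u ∈ D, ∀ v, v ∉ D → adj2 u v → v ∈ A)
    (hK : ∀ u v l u' v' l', u ∈ D → v ∉ D → adj2 u v → (l = u ∨ l = v) → l ∈ L →
      u' ∈ D → v' ∉ D → adj2 u' v' → (l' = u' ∨ l' = v') → l' ∈ L → near l l' → l ∈ K → l' ∈ K)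
    (hL : ∀ u ∈ D, ∀ v, v ∉ D → adj2 u v → ((u ∈ L ∧ v ∉ L) ∨ (u ∉ L ∧ v ∈ L)))
    (u v u' v' : ℤ × ℤ) (hu : u ∈ D) (hv : v ∉ D) (huv : adj2 u v)
    (hu' : u' ∈ D) (hv' : v' ∉ D) (huv' : adj2 u' v')
    (hP : (u ∈ L ∧ u ∈ K) ∨ (v ∈ L ∧ v ∈ K)) : (u' ∈ L ∧ u' ∈ K) ∨ (v' ∈ L ∧ v' ∈ K) := by
  set P : ℤ × ℤ → ℤ × ℤ → Prop := fun a b => (a ∈ L ∧ a ∈ K) ∨ (b ∈ L ∧ b ∈ K) with hPdef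
  have Psymm : ∀ a b, P a b ↔ P b a := fun a b => by simp only [hPdef]; tauto
  set c : ℤ × ℤ → ℤ × ℤ → ℤ := fun a b =>
    if P a b then (if b ∈ D then 1 else 0) - (if a ∈ D then 1 else 0) else 0 with hc
  have canti : ∀ a b, c b a = - c a b := by
    intro a b
    simp only [hc, Psymm b a]
    split_ifs <;> simp
  -- label equality of near boundary edges, oriented form
  have key0 : ∀ a b a' b', a ∈ D → b ∉ D → adj2 a b → a' ∈ D → b' ∉ D → adj2 a' b' →
      near a a' → near a b' → near b a' → near b b' → P a b → P a' b' := by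
    intro a b a' b' ha hb' hab ha' hb'' hab' n1 n2 n3 n4 hp
    rcases hp with ⟨h1, h2⟩ | ⟨h1, h2⟩
    · rcases hL a' ha' b' hb'' hab' with h | h
      · exact Or.inl ⟨h.1, hK a b a a' b' a' ha hb' hab (Or.inl rfl) h1 ha' hb'' hab'
          (Or.inl rfl) h.1 n1 h2⟩
      · exact Or.inr ⟨h.2, hK a b a a' b' b' ha hb' hab (Or.inl rfl) h1 ha' hb'' hab'
          (Or.inr rfl) h.2 n2 h2⟩
    · rcases hL a' ha' b' hb'' hab' with h | h
      · exact Or.inl ⟨h.1, hK a b b a' b' a' ha hb' hab (Or.inr rfl) h1 ha' hb'' hab'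
          (Or.inl rfl) h.1 n3 h2⟩
      · exact Or.inr ⟨h.2, hK a b b a' b' b' ha hb' hab (Or.inr rfl) h1 ha' hb'' hab'
          (Or.inr rfl) h.2 n4 h2⟩
  have key : ∀ a b a' b', adj2 a b → adj2 a' b' →
      near a a' → near a b' → near b a' → near b b' →
      ¬ (a ∈ D ↔ b ∈ D) → ¬ (a' ∈ D ↔ b' ∈ D) → P a b → P a' b' := by
    intro a b a' b' hab hab' n1 n2 n3 n4 h h' hp
    by_cases ha : a ∈ D <;> by_cases ha' : a' ∈ D
    · exact key0 a b a' b' ha (by tauto) hab ha' (by tauto) hab' n1 n2 n3 n4 hp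
    · exact (Psymm _ _).1 (key0 a b b' a' ha (by tauto) hab (by tauto) ha' (adj2_symm hab')
        n2 n1 n4 n3 hp)
    · exact (key0 b a a' b' (by tauto) ha (adj2_symm hab) ha' (by tauto) hab'
        n3 n4 n1 n2 ((Psymm _ _).1 hp))
    · exact (Psymm _ _).1 (key0 b a b' a' (by tauto) ha (adj2_symm hab) (by tauto) ha'
        (adj2_symm hab') n4 n3 n2 n1 ((Psymm _ _).1 hp))
  obtain ⟨f, hf1, hf2⟩ := exists_potential (fun x y => c (x, y) (x + 1, y))
    (fun x y => c (x, y) (x, y + 1)) (by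
      intro x y
      have hex : ∃ Q : Prop, ∀ a b : ℤ × ℤ, ((a = (x, y) ∧ b = (x + 1, y)) ∨
          (a = (x + 1, y) ∧ b = (x + 1, y + 1)) ∨ (a = (x, y) ∧ b = (x, y + 1)) ∨
          (a = (x, y + 1) ∧ b = (x + 1, y + 1))) → ¬ (a ∈ D ↔ b ∈ D) → (P a b ↔ Q) := by
        set Sq : ℤ × ℤ → ℤ × ℤ → Prop := fun a b => ((a = (x, y) ∧ b = (x + 1, y)) ∨
          (a = (x + 1, y) ∧ b = (x + 1, y + 1)) ∨ (a = (x, y) ∧ b = (x, y + 1)) ∨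
          (a = (x, y + 1) ∧ b = (x + 1, y + 1))) with hSq
        refine ⟨∃ a b, Sq a b ∧ ¬ (a ∈ D ↔ b ∈ D) ∧ P a b, ?_⟩
        intro a b hab hne
        refine ⟨fun hp => ⟨a, b, hab, hne, hp⟩, ?_⟩
        rintro ⟨a', b', hab', hne', hp'⟩
        have hadj : ∀ a b, Sq a b → adj2 a b := by
          rintro a b (⟨rfl, rfl⟩ | ⟨rfl, rfl⟩ | ⟨rfl, rfl⟩ | ⟨rfl, rfl⟩) <;> simp [adj2]
        have hbox : ∀ a b, Sq a b → (x ≤ a.1 ∧ a.1 ≤ x + 1 ∧ y ≤ a.2 ∧ a.2 ≤ y + 1) ∧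
            (x ≤ b.1 ∧ b.1 ≤ x + 1 ∧ y ≤ b.2 ∧ b.2 ≤ y + 1) := by
          rintro a b (⟨rfl, rfl⟩ | ⟨rfl, rfl⟩ | ⟨rfl, rfl⟩ | ⟨rfl, rfl⟩) <;> simp
        have hnear : ∀ a b : ℤ × ℤ, (x ≤ a.1 ∧ a.1 ≤ x + 1 ∧ y ≤ a.2 ∧ a.2 ≤ y + 1) →
            (x ≤ b.1 ∧ b.1 ≤ x + 1 ∧ y ≤ b.2 ∧ b.2 ≤ y + 1) → near a b := by
          intro a b h1 h2
          constructor <;> rw [abs_le] <;> omega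
        have B := hbox a b hab
        have B' := hbox a' b' hab'
        exact key a' b' a b (hadj _ _ hab') (hadj _ _ hab) (hnear _ _ B'.1 B.1)
          (hnear _ _ B'.1 B.2) (hnear _ _ B'.2 B.1) (hnear _ _ B'.2 B.2) hne' hne hp'
      obtain ⟨Q, hQ⟩ := hex
      have hcc : ∀ a b : ℤ × ℤ, (¬ (a ∈ D ↔ b ∈ D) → (P a b ↔ Q)) →
          c a b = if Q then (if b ∈ D then 1 else 0) - (if a ∈ D then 1 else 0) else 0 := by
        intro a b h
        by_cases h1 : a ∈ D ↔ b ∈ D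
        · simp [hc, h1]
        · simp only [hc, h h1]
      rw [hcc _ _ (hQ (x, y) (x + 1, y) (by simp)),
        hcc _ _ (hQ (x + 1, y) (x + 1, y + 1) (by simp)),
        hcc _ _ (hQ (x, y) (x, y + 1) (by simp)),
        hcc _ _ (hQ (x, y + 1) (x + 1, y + 1) (by simp))]
      split_ifs <;> simp)
  have hf : ∀ a b : ℤ × ℤ, adj2 a b → f b.1 b.2 - f a.1 a.2 = c a b := by
    rintro ⟨x, y⟩ b h
    rcases adj2_cases h with rfl | rfl | rfl | rfl
    · exact hf1 x y
    · have := hf1 (x - 1) y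
      simp only [sub_add_cancel] at this
      rw [canti]; simp only; rw [← this]; ring
    · exact hf2 x y
    · have := hf2 x (y - 1)
      simp only [sub_add_cancel] at this
      rw [canti]; simp only; rw [← this]; ring
  have hcD : ∀ S : Set (ℤ × ℤ), (∀ a ∈ S, ∀ b ∈ S, (a ∈ D ↔ b ∈ D)) → ∀ a b, ConnIn S a b →
      f a.1 a.2 = f b.1 b.2 := by
    intro S hS a b h
    induction h with
    | refl => rfl
    | @tail b' c' _ h ih =>
      obtain ⟨h1, h2, h3⟩ := h
      have := hf _ _ h3
      have e : c b' c' = 0 := by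
        simp only [hc, hS _ h1 _ h2, sub_self, ite_self]
      rw [e] at this
      linarith
  have e1 := hcD D (fun a ha b hb => by tauto) u u' (hD u hu u' hu')
  have e2 := hcD A (fun a ha b hb => by
    have := fun h => hdis a h ha
    have := fun h => hdis b h hb
    tauto) v v' (hA v (hb u hu v hv huv) v' (hb u' hu' v' hv' huv'))
  have e3 := hf u v huv
  have e4 := hf u' v' huv'
  have e5 : c u v = -1 := by simp only [hc]; rw [if_pos hP]; simp [hu, hv]
  by_contra hcon
  have e6 : c u' v' = 0 := by simp only [hc]; rw [if_neg hcon]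
  linarith

lemma int_line (S : ℤ → Prop) (t : ℤ) (h : ∀ n, t ≤ n → (S n ↔ S (n + 1))) (m n : ℤ)
    (hm : t ≤ m) (hn : t ≤ n) : S m ↔ S n := by
  have : ∀ k : ℕ, S t ↔ S (t + k) := by
    intro k
    induction k with
    | zero => simp
    | succ k ih =>
      rw [ih, h (t + k) (by omega)]
      push_cast; rw [add_assoc]
  have h1 := this (m - t).toNat
  have h2 := this (n - t).toNat
  rw [show t + ((m - t).toNat : ℤ) = m by omega] at h1
  rw [show t + ((n - t).toNat : ℤ) = n by omega] at h2
  rw [← h1, h2]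

lemma half_plane (D K : Set (ℤ × ℤ))
    (hb : ∀ u ∈ D, ∀ v, v ∉ D → adj2 u v → u ∈ K ∨ v ∈ K) (t : ℤ)
    (hK : ∀ k ∈ K, k.1 < t) (u v : ℤ × ℤ) (hu : t ≤ u.1) (hv : t ≤ v.1) (huD : u ∈ D) :
    v ∈ D := by
  have hstep : ∀ a b : ℤ × ℤ, t ≤ a.1 → t ≤ b.1 → adj2 a b → (a ∈ D ↔ b ∈ D) := by
    intro a b ha hb' hab
    have na : a ∉ K := fun h => by have := hK a h; omega
    have nb : b ∉ K := fun h => by have := hK b h; omega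
    have h1 := fun h h' => hb a h b h' hab
    have h2 := fun h h' => hb b h a h' (adj2_symm hab)
    tauto
  have h1 : (u.1, u.2) ∈ D ↔ (v.1, u.2) ∈ D :=
    int_line (fun n => (n, u.2) ∈ D) t
      (fun n hn => hstep _ _ hn (by simp only; omega) (adj2_right n u.2)) u.1 v.1 hu hv
  have h2 : (v.1, u.2) ∈ D ↔ (v.1, v.2) ∈ D :=
    int_line (fun n => (v.1, n) ∈ D) (min u.2 v.2)
      (fun n hn => hstep _ _ hv hv (adj2_up v.1 n)) u.2 v.2 (by omega) (by omega)
  exact h2.1 (h1.1 huD)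

/-- transporting `half_plane` along a symmetry of the lattice -/
lemma half_plane' (φ ψ : ℤ × ℤ → ℤ × ℤ) (hφψ : ∀ x, φ (ψ x) = x)
    (hadj : ∀ a b, adj2 a b → adj2 (φ a) (φ b)) (D K : Set (ℤ × ℤ))
    (hb : ∀ u ∈ D, ∀ v, v ∉ D → adj2 u v → u ∈ K ∨ v ∈ K) (t : ℤ)
    (hK : ∀ k, φ k ∈ K → k.1 < t) (u v : ℤ × ℤ) (hu : t ≤ (ψ u).1) (hv : t ≤ (ψ v).1)
    (huD : u ∈ D) : v ∈ D := by
  have := half_plane (φ ⁻¹' D) (φ ⁻¹' K) (fun a ha b hb' hab => hb _ ha _ hb' (hadj _ _ hab)) t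
    hK (ψ u) (ψ v) hu hv (by simpa [hφψ] using huD)
  simpa [hφψ] using this

lemma finite_nrm (M : ℕ) : {x : ℤ × ℤ | nrm x ≤ M}.Finite := by
  apply ((Finset.Icc (-(M : ℤ)) M) ×ˢ (Finset.Icc (-(M : ℤ)) M)).finite_toSet.subset
  intro x hx
  simp only [Set.mem_ofPred_eq, nrm] at hx
  simp only [Finset.coe_product, Finset.coe_Icc, Set.mem_prod, Set.mem_Icc]
  omega

lemma box_contains (D K A : Set (ℤ × ℤ)) (hdis : ∀ u ∈ D, u ∉ A)
    (hb : ∀ u ∈ D, ∀ v, v ∉ D → adj2 u v → u ∈ K ∨ v ∈ K) (hDinf : D.Infinite)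
    (M : ℕ) (hM : ∀ k ∈ K, nrm k ≤ M) (a : ℤ × ℤ) (ha : a ∈ A) :
    (∃ k ∈ K, a.1 ≤ k.1) ∧ (∃ k ∈ K, k.1 ≤ a.1) ∧ (∃ k ∈ K, a.2 ≤ k.2) ∧ (∃ k ∈ K, k.2 ≤ a.2) := by
  have hM' : ∀ k ∈ K, k.1 ≤ M ∧ -k.1 ≤ M ∧ k.2 ≤ M ∧ -k.2 ≤ M := by
    intro k hk
    have := hM k hk
    simp only [nrm] at this
    omega
  have R : ∀ t : ℤ, (∀ k ∈ K, k.1 < t) → ∀ u v : ℤ × ℤ, t ≤ u.1 → t ≤ v.1 → u ∈ D → v ∈ D :=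
    fun t h => half_plane D K hb t h
  have Lf : ∀ t : ℤ, (∀ k ∈ K, -k.1 < t) → ∀ u v : ℤ × ℤ, t ≤ -u.1 → t ≤ -v.1 → u ∈ D → v ∈ D :=
    fun t h => half_plane' (fun x => (-x.1, x.2)) (fun x => (-x.1, x.2)) (by simp)
      (fun a b h => by
        unfold adj2 at *; simp only [← h]; congr 1; rw [← abs_neg]; congr 1; ring) D K hb t
      (fun k hk => by simpa using h _ hk)
  have U : ∀ t : ℤ, (∀ k ∈ K, k.2 < t) → ∀ u v : ℤ × ℤ, t ≤ u.2 → t ≤ v.2 → u ∈ D → v ∈ D :=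
    fun t h => half_plane' (fun x => (x.2, x.1)) (fun x => (x.2, x.1)) (by simp)
      (fun a b h => by unfold adj2 at *; simp only [← h]; ring) D K hb t
      (fun k hk => by simpa using h _ hk)
  have B : ∀ t : ℤ, (∀ k ∈ K, -k.2 < t) → ∀ u v : ℤ × ℤ, t ≤ -u.2 → t ≤ -v.2 → u ∈ D → v ∈ D :=
    fun t h => half_plane' (fun x => (x.2, -x.1)) (fun x => (-x.2, x.1)) (by simp)
      (fun a b h => by
        unfold adj2 at *; simp only [← h]; rw [add_comm]; congr 1; rw [← abs_neg]; congr 1; ring)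
      D K hb t
      (fun k hk => by simpa using h _ hk)
  have R1 := R (M + 1) (fun k hk => by have := hM' k hk; omega)
  have L1 := Lf (M + 1) (fun k hk => by have := hM' k hk; omega)
  have U1 := U (M + 1) (fun k hk => by have := hM' k hk; omega)
  have B1 := B (M + 1) (fun k hk => by have := hM' k hk; omega)
  -- every point outside the box is in D
  have hout : ∀ x : ℤ × ℤ, M < nrm x → x ∈ D := by
    obtain ⟨d, hd, hdM⟩ : ∃ d ∈ D, M < nrm d := by
      by_contra hcon
      push Not at hcon
      exact hDinf ((finite_nrm M).subset hcon)
    have c1 : ((M : ℤ) + 1, (M : ℤ) + 1) ∈ D := by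
      have hd' : (M : ℤ) + 1 ≤ d.1 ∨ (M : ℤ) + 1 ≤ -d.1 ∨ (M : ℤ) + 1 ≤ d.2 ∨ (M : ℤ) + 1 ≤ -d.2 := by
        simp only [nrm] at hdM; omega
      rcases hd' with h | h | h | h
      · exact R1 d _ h (by simp) hd
      · have := L1 d (-((M : ℤ) + 1), (M : ℤ) + 1) h (by simp) hd
        exact U1 _ _ (by simp) (by simp) this
      · exact U1 d _ h (by simp) hd
      · have := B1 d ((M : ℤ) + 1, -((M : ℤ) + 1)) h (by simp) hd
        exact R1 _ _ (by simp) (by simp) this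
    have c2 : (-((M : ℤ) + 1), (M : ℤ) + 1) ∈ D := U1 _ _ (by simp) (by simp) c1
    have c3 : ((M : ℤ) + 1, -((M : ℤ) + 1)) ∈ D := R1 _ _ (by simp) (by simp) c1
    intro x hx
    have hd' : (M : ℤ) + 1 ≤ x.1 ∨ (M : ℤ) + 1 ≤ -x.1 ∨ (M : ℤ) + 1 ≤ x.2 ∨ (M : ℤ) + 1 ≤ -x.2 := by
      simp only [nrm] at hx; omega
    rcases hd' with h | h | h | h
    · exact R1 _ _ (by simp) h c1
    · exact L1 _ _ (by simp) h c2
    · exact U1 _ _ (by simp) h c1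
    · exact B1 _ _ (by simp) h c3
  have haD : a ∉ D := fun h => hdis a h ha
  refine ⟨?_, ?_, ?_, ?_⟩
  · by_contra! hcon
    exact haD (R a.1 hcon (max a.1 (M + 1), 0) a (by simp) le_rfl
      (hout _ (by simp only [nrm]; omega)))
  · by_contra! hcon
    exact haD (Lf (-a.1) (fun k hk => by have := hcon k hk; omega) (min a.1 (-(M + 1)), 0) a
      (by simp only; omega) le_rfl (hout _ (by simp only [nrm]; omega)))
  · by_contra! hcon
    exact haD (U a.2 hcon (0, max a.2 (M + 1)) a (by simp) le_rfl
      (hout _ (by simp only [nrm]; omega)))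
  · by_contra! hcon
    exact haD (B (-a.2) (fun k hk => by have := hcon k hk; omega) (0, min a.2 (-(M + 1))) a
      (by simp only; omega) le_rfl (hout _ (by simp only [nrm]; omega)))

/-- every two points of the lattice are connected -/
lemma exists_boundary (D : Set (ℤ × ℤ)) (d a : ℤ × ℤ) (hd : d ∈ D) (ha : a ∉ D) :
    ∃ u ∈ D, ∃ v, v ∉ D ∧ adj2 u v := by
  by_contra! hcon
  exact ha (half_plane D ∅ (fun u hu v hv h => (hcon u hu v hv h).elim) (min d.1 a.1) (by simp)
    d a (by simp) (by simp) hd)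

/-- Closed star-cluster. -/
def Kc (ω : (ℤ × ℤ) → Bool) (z : ℤ × ℤ) : Set (ℤ × ℤ) := {y | (cGraph ω).Reachable z y}

lemma Kc_closed {ω : (ℤ × ℤ) → Bool} {z y : ℤ × ℤ} (hz : ω z = false) (hy : y ∈ Kc ω z) :
    ω y = false := by
  obtain ⟨p⟩ := hy
  exact support_closed hz p y p.end_mem_support

lemma Kc_finite {ω : (ℤ × ℤ) → Bool} (hbad : {x | ω ∈ Ev x}.Finite) {z : ℤ × ℤ}
    (hz : ω z = false) : (Kc ω z).Finite := by
  by_contra hinf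
  apply hinf
  apply hbad.subset
  intro x hx
  obtain ⟨y, hy, hyx⟩ : ∃ y ∈ Kc ω z, 2 * nrm x < nrm y := by
    by_contra! hcon
    exact hinf ((finite_nrm _).subset hcon)
  refine mem_Ev (y := y) (Kc_closed hz hx) (SimpleGraph.Reachable.trans hx.symm hy) ?_
  simp only [nrm, Prod.fst_sub, Prod.snd_sub] at *
  omega

lemma nrm_le_iff (x : ℤ × ℤ) (n : ℕ) :
    nrm x ≤ n ↔ x.1 ≤ n ∧ -x.1 ≤ n ∧ x.2 ≤ n ∧ -x.2 ≤ n := by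
  simp only [nrm]; omega

lemma nrm_ge (x : ℤ × ℤ) : x.1 ≤ nrm x ∧ -x.1 ≤ nrm x ∧ x.2 ≤ nrm x ∧ -x.2 ≤ nrm x :=
  (nrm_le_iff x _).1 le_rfl

lemma surround (ω : (ℤ × ℤ) → Bool) (hbad : {x | ω ∈ Ev x}.Finite) (D A L : Set (ℤ × ℤ))
    (hD : ∀ u ∈ D, ∀ v ∈ D, ConnIn D u v)
    (hA : ∀ u ∈ A, ∀ v ∈ A, ConnIn A u v) (hdis : ∀ u ∈ D, u ∉ A)
    (hb : ∀ u ∈ D, ∀ v, v ∉ D → adj2 u v → v ∈ A)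
    (hL : ∀ u ∈ D, ∀ v, v ∉ D → adj2 u v → ((u ∈ L ∧ v ∉ L) ∨ (u ∉ L ∧ v ∈ L)))
    (hcl : ∀ u ∈ D, ∀ v, v ∉ D → adj2 u v → (u ∈ L → ω u = false) ∧ (v ∈ L → ω v = false))
    (hDinf : D.Infinite) (h0 : (0, 0) ∈ A) :
    ∃ z ∈ L, ∃ x, ω ∈ Ev x ∧ nrm z ≤ nrm x ∧ ∀ a ∈ A, nrm a ≤ nrm x := by
  obtain ⟨d, hd⟩ := hDinf.nonempty
  obtain ⟨u, hu, v, hv, huv⟩ := exists_boundary D d (0, 0) hd (fun h => hdis _ h h0)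
  obtain ⟨z, hzuv, hzL⟩ : ∃ z, (z = u ∨ z = v) ∧ z ∈ L := by
    rcases hL u hu v hv huv with h | h
    · exact ⟨u, Or.inl rfl, h.1⟩
    · exact ⟨v, Or.inr rfl, h.2⟩
  have hlab : ∀ u ∈ D, ∀ v, v ∉ D → adj2 u v → ∀ l, (l = u ∨ l = v) → l ∈ L → ω l = false := by
    rintro u hu v hv huv l (rfl | rfl) hl
    · exact (hcl _ hu v hv huv).1 hl
    · exact (hcl u hu _ hv huv).2 hl
  have hz : ω z = false := hlab u hu v hv huv z hzuv hzL
  have hzK : z ∈ Kc ω z := SimpleGraph.Reachable.refl _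
  have hall : ∀ u' ∈ D, ∀ v', v' ∉ D → adj2 u' v' → u' ∈ Kc ω z ∨ v' ∈ Kc ω z := by
    intro u' hu' v' hv' huv'
    have := topo D A L (Kc ω z) hD hA hdis hb ?_ hL u v u' v' hu hv huv hu' hv' huv' ?_
    · tauto
    · intro a b l a' b' l' ha hb' hab hl hlL ha' hb'' hab' hl' hlL' hn hlK
      by_cases he : l = l'
      · rwa [← he]
      · refine SimpleGraph.Reachable.trans hlK (SimpleGraph.Adj.reachable ?_)
        exact ⟨he, hn.1, hn.2, hlab a ha b hb' hab l hl hlL, hlab a' ha' b' hb'' hab' l' hl' hlL'⟩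
    · rcases hzuv with rfl | rfl
      · exact Or.inl ⟨hzL, hzK⟩
      · exact Or.inr ⟨hzL, hzK⟩
  have hfin := Kc_finite hbad hz
  obtain ⟨x, hxK, hx⟩ := Set.exists_max_image (Kc ω z) nrm hfin ⟨z, hzK⟩
  have hbox := box_contains D (Kc ω z) A hdis hall hDinf (nrm x) hx
  refine ⟨z, hzL, x, ?_, hx z hzK, ?_⟩
  · have h00 := hbox _ h0
    obtain ⟨⟨k1, hk1, e1⟩, ⟨k2, hk2, e2⟩, ⟨k3, hk3, e3⟩, ⟨k4, hk4, e4⟩⟩ := h00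
    have : ∃ y ∈ Kc ω z, nrm x ≤ nrm (y - x) := by
      by_contra! hcon
      have hxc : (nrm x : ℤ) = x.1 ∨ (nrm x : ℤ) = -x.1 ∨ (nrm x : ℤ) = x.2 ∨
          (nrm x : ℤ) = -x.2 := by
        simp only [nrm]; omega
      have f1 := (nrm_le_iff _ _).1 (hcon k1 hk1).le
      have f2 := (nrm_le_iff _ _).1 (hcon k2 hk2).le
      have f3 := (nrm_le_iff _ _).1 (hcon k3 hk3).le
      have f4 := (nrm_le_iff _ _).1 (hcon k4 hk4).le
      have g1 := nrm_ge (k1 - x)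
      have g2 := nrm_ge (k2 - x)
      have g3 := nrm_ge (k3 - x)
      have g4 := nrm_ge (k4 - x)
      have i1 := hcon k1 hk1
      have i2 := hcon k2 hk2
      have i3 := hcon k3 hk3
      have i4 := hcon k4 hk4
      simp only [Prod.fst_sub, Prod.snd_sub] at f1 f2 f3 f4 g1 g2 g3 g4 e1 e2 e3 e4
      rcases hxc with h | h | h | h <;> omega
    obtain ⟨y, hy, hyx⟩ := this
    exact mem_Ev (Kc_closed hz hxK) (SimpleGraph.Reachable.trans hxK.symm hy) hyx
  · intro a ha
    obtain ⟨⟨k1, hk1, e1⟩, ⟨k2, hk2, e2⟩, ⟨k3, hk3, e3⟩, ⟨k4, hk4, e4⟩⟩ := hbox a ha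
    have f1 := (nrm_le_iff _ _).1 (hx k1 hk1)
    have f2 := (nrm_le_iff _ _).1 (hx k2 hk2)
    have f3 := (nrm_le_iff _ _).1 (hx k3 hk3)
    have f4 := (nrm_le_iff _ _).1 (hx k4 hk4)
    rw [nrm_le_iff]
    omega

lemma ConnIn.symm {A : Set (ℤ × ℤ)} {a b : ℤ × ℤ} (h : ConnIn A a b) : ConnIn A b a := by
  induction h with
  | refl => exact Relation.ReflTransGen.refl
  | tail _ h ih => exact Relation.ReflTransGen.head ⟨h.2.1, h.1, adj2_symm h.2.2⟩ ih

lemma ConnIn.mem {A : Set (ℤ × ℤ)} {a b : ℤ × ℤ} (h : ConnIn A a b) (ha : a ∈ A) : b ∈ A := by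
  induction h with
  | refl => exact ha
  | tail _ h _ => exact h.2.1

/-- components are connected within themselves -/
lemma comp_conn (A : Set (ℤ × ℤ)) (a : ℤ × ℤ) :
    ∀ u ∈ {y | ConnIn A a y}, ∀ v ∈ {y | ConnIn A a y}, ConnIn {y | ConnIn A a y} u v := by
  have : ∀ u, ConnIn A a u → ConnIn {y | ConnIn A a y} a u := by
    intro u hu
    induction hu with
    | refl => exact Relation.ReflTransGen.refl
    | tail h1 h2 ih =>
      exact ih.tail ⟨h1, Relation.ReflTransGen.tail h1 h2, h2.2.2⟩
  intro u hu v hv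
  exact (this u hu).symm.trans (this v hv)

lemma InfCluster_adj {ω : (ℤ × ℤ) → Bool} {u v : ℤ × ℤ} (hu : u ∈ InfCluster ω)
    (hv : ω v = true) (h : adj2 u v) : v ∈ InfCluster ω := by
  refine ⟨hv, hu.2.mono ?_⟩
  intro y hy
  exact Relation.ReflTransGen.head ⟨hv, hu.1, adj2_symm h⟩ hy

lemma case_nonempty (ω : (ℤ × ℤ) → Bool) (hbad : {x | ω ∈ Ev x}.Finite)
    (h0 : (0, 0) ∉ InfCluster ω) (c : ℤ × ℤ) (hc : c ∈ InfCluster ω) :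
    ∃ x, ω ∈ Ev x ∧ ∀ a, ConnIn (InfCluster ω)ᶜ (0, 0) a → nrm a ≤ nrm x := by
  set G : Set (ℤ × ℤ) := {y | ConnIn (InfCluster ω)ᶜ (0, 0) y} with hG
  have hGC : ∀ y ∈ G, y ∉ InfCluster ω := fun y hy => ConnIn.mem hy h0
  have hcG : c ∉ G := fun h => hGC c h hc
  set D : Set (ℤ × ℤ) := {y | ConnIn Gᶜ c y} with hDdef
  have hDG : ∀ u ∈ D, u ∉ G := fun u hu => ConnIn.mem hu hcG
  have hbd : ∀ u ∈ D, ∀ v, v ∉ D → adj2 u v → v ∈ G := by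
    intro u hu v hv huv
    by_contra hvG
    exact hv (Relation.ReflTransGen.tail hu ⟨hDG u hu, hvG, huv⟩)
  have hcl : ∀ u ∈ D, ∀ v, v ∉ D → adj2 u v →
      (u ∈ Dᶜ → ω u = false) ∧ (v ∈ Dᶜ → ω v = false) := by
    intro u hu v hv huv
    refine ⟨fun h => (h hu).elim, fun _ => ?_⟩
    have hvG := hbd u hu v hv huv
    have huC : u ∈ InfCluster ω := by
      by_contra huC
      exact hDG u hu (Relation.ReflTransGen.tail hvG ⟨hGC v hvG, huC, adj2_symm huv⟩)
    by_contra hvo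
    exact hGC v hvG (InfCluster_adj huC (by simpa using hvo) huv)
  have hinf : D.Infinite := by
    refine hc.2.mono ?_
    intro y hy
    have : y ∈ InfCluster ω ∧ ConnIn Gᶜ c y := by
      induction hy with
      | refl => exact ⟨hc, Relation.ReflTransGen.refl⟩
      | tail h1 h2 ih =>
        have h3 := InfCluster_adj ih.1 h2.2.1 h2.2.2
        exact ⟨h3, ih.2.tail ⟨fun h => hGC _ h ih.1, fun h => hGC _ h h3, h2.2.2⟩⟩
    exact this.2
  obtain ⟨z, -, x, hx, -, h⟩ := surround ω hbad D G Dᶜ (comp_conn _ _) (comp_conn _ _) hDG hbd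
    (fun u hu v hv _ => Or.inr ⟨fun h => h hu, hv⟩) hcl hinf Relation.ReflTransGen.refl
  exact ⟨x, hx, h⟩

lemma case_empty (ω : (ℤ × ℤ) → Bool) (hbad : {x | ω ∈ Ev x}.Finite) :
    ∃ c, c ∈ InfCluster ω := by
  by_contra! hcon
  obtain ⟨R, hR⟩ : ∃ R, ∀ x, ω ∈ Ev x → nrm x ≤ R := by
    obtain ⟨R, hR⟩ := (hbad.image nrm).bddAbove
    exact ⟨R, fun x hx => hR ⟨x, hx, rfl⟩⟩
  set Op : Set (ℤ × ℤ) := {z | ω z = true} with hOp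
  set W : Set (ℤ × ℤ) := {z | nrm z ≤ R} ∪ Op with hW
  set A : Set (ℤ × ℤ) := {y | ConnIn W (0, 0) y} with hA
  have h0W : (0, 0) ∈ W := Or.inl (by simp [nrm])
  have hAW : ∀ y ∈ A, y ∈ W := fun y hy => ConnIn.mem hy h0W
  have hAfin : A.Finite := by
    have hfin : ({z | nrm z ≤ R} ∪
        ⋃ u ∈ {u | nrm u ≤ R + 1 ∧ ω u = true}, {y | ConnIn Op u y}).Finite := by
      refine (finite_nrm R).union (Set.Finite.biUnion ?_ ?_)
      · exact (finite_nrm (R + 1)).subset (fun u hu => hu.1)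
      · intro u hu
        by_contra hinf
        exact hcon u ⟨hu.2, hinf⟩
    refine hfin.subset ?_
    intro y hy
    induction hy with
    | refl => left; simp [nrm]
    | @tail b c h1 h2 ih =>
      obtain ⟨hb, hc, hbc⟩ := h2
      by_cases hcR : nrm c ≤ R
      · exact Or.inl hcR
      right
      have hco : ω c = true := by
        rcases hc with h | h
        · exact (hcR h).elim
        · exact h
      simp only [Set.mem_iUnion]
      rcases ih with h | h
      · refine ⟨c, ⟨?_, hco⟩, Relation.ReflTransGen.refl⟩
        rcases adj2_cases hbc with rfl | rfl | rfl | rfl <;>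
        · simp only [Set.mem_ofPred_eq, nrm] at h ⊢; omega
      · simp only [Set.mem_iUnion] at h
        obtain ⟨u, hu, hub⟩ := h
        exact ⟨u, hu, Relation.ReflTransGen.tail hub ⟨ConnIn.mem hub hu.2, hco, hbc⟩⟩
  obtain ⟨M, hM⟩ : ∃ M, ∀ x ∈ A, nrm x ≤ M := by
    obtain ⟨M, hM⟩ := (hAfin.image nrm).bddAbove
    exact ⟨M, fun x hx => hM ⟨x, hx, rfl⟩⟩
  have hray : ∀ n : ℕ, ((M : ℤ) + 1 + n, (0 : ℤ)) ∉ A := by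
    intro n h
    have := hM _ h
    simp only [nrm] at this
    omega
  set D : Set (ℤ × ℤ) := {y | ConnIn Aᶜ ((M : ℤ) + 1, 0) y} with hD
  have hDA : ∀ u ∈ D, u ∉ A := fun u hu => ConnIn.mem hu (by simpa using hray 0)
  have hbd : ∀ u ∈ D, ∀ v, v ∉ D → adj2 u v → v ∈ A := by
    intro u hu v hv huv
    by_contra hvA
    exact hv (Relation.ReflTransGen.tail hu ⟨hDA u hu, hvA, huv⟩)
  have hrayD : ∀ n : ℕ, ((M : ℤ) + 1 + n, (0 : ℤ)) ∈ D := by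
    intro n
    induction n with
    | zero =>
      have : ((M : ℤ) + 1, (0 : ℤ)) ∈ D := Relation.ReflTransGen.refl
      simpa using this
    | succ n ih =>
      refine Relation.ReflTransGen.tail ih ⟨hray n, hray (n + 1), ?_⟩
      push_cast
      rw [← add_assoc]
      exact adj2_right _ _
  have hDinf : D.Infinite := by
    refine Set.infinite_of_injective_forall_mem (f := fun n : ℕ => ((M : ℤ) + 1 + n, (0 : ℤ)))
      ?_ hrayD
    intro a b h
    simpa using h
  have houtW : ∀ u ∈ D, ∀ v, v ∉ D → adj2 u v → u ∉ W := by
    intro u hu v hv huv huW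
    have hvA := hbd u hu v hv huv
    exact hDA u hu (Relation.ReflTransGen.tail hvA ⟨hAW v hvA, huW, adj2_symm huv⟩)
  -- restrict the labels to sites outside `W`
  obtain ⟨z, hzL, x, hx, hzx, -⟩ := surround ω hbad D A (D ∩ Wᶜ) (comp_conn _ _) (comp_conn _ _)
    hDA hbd (fun u hu v hv huv => Or.inl ⟨⟨hu, houtW u hu v hv huv⟩, fun h => hv h.1⟩)
    (fun u hu v hv huv => ⟨fun h => by
      have := h.2
      simp only [hW, hOp, Set.mem_compl_iff, Set.mem_union, Set.mem_ofPred_eq, not_or] at this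
      simpa using this.2, fun h => (hv h.1).elim⟩) hDinf Relation.ReflTransGen.refl
  have h1 := hR x hx
  exact hzL.2 (Or.inl (hzx.trans h1))

lemma encard_box (M : ℕ) : {x : ℤ × ℤ | nrm x ≤ M}.encard ≤ (((2 * M + 1) ^ 2 : ℕ) : ℕ∞) := by
  have : {x : ℤ × ℤ | nrm x ≤ M} ⊆
      ((((Finset.Icc (-(M : ℤ)) M) ×ˢ (Finset.Icc (-(M : ℤ)) M)) : Finset (ℤ × ℤ)) :
        Set (ℤ × ℤ)) := by
    intro x hx
    simp only [Set.mem_ofPred_eq, nrm] at hx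
    simp only [Finset.coe_product, Finset.coe_Icc, Set.mem_prod, Set.mem_Icc]
    omega
  refine (Set.encard_le_encard this).trans ?_
  rw [Set.encard_coe_eq_coe_finsetCard, Finset.card_product, Int.card_Icc]
  rw [show ((M : ℤ) + 1 - -(M : ℤ)).toNat = 2 * M + 1 by omega, sq]

lemma comp_le_Nn (ω : (ℤ × ℤ) → Bool) : ((CompOfOrigin ω).encard : ENNReal) ≤ Nn ω := by
  by_cases htop : Nn ω = ⊤
  · rw [htop]; exact le_top
  have hbad : {x | ω ∈ Ev x}.Finite := by
    refine (ENNReal.finite_const_le_of_tsum_ne_top htop (ε := 1) one_ne_zero).subset ?_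
    intro x hx
    simp only [Set.mem_ofPred_eq] at hx ⊢
    rw [Set.indicator_of_mem hx]
    exact_mod_cast Nat.one_le_pow _ _ (by omega)
  by_cases h0 : (0, 0) ∈ InfCluster ω
  · have : CompOfOrigin ω = ∅ := by ext y; simp [CompOfOrigin, h0]
    simp [this]
  obtain ⟨c, hc⟩ := case_empty ω hbad
  obtain ⟨x, hx, h⟩ := case_nonempty ω hbad h0 c hc
  have h1 : (CompOfOrigin ω).encard ≤ (((2 * nrm x + 1) ^ 2 : ℕ) : ℕ∞) :=
    (Set.encard_le_encard (fun a ha => h a ha.2)).trans (encard_box (nrm x))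
  calc ((CompOfOrigin ω).encard : ENNReal) ≤ (((2 * nrm x + 1) ^ 2 : ℕ) : ENNReal) := by
        have := ENat.toENNReal_le.2 h1
        rwa [ENat.toENNReal_coe] at this
    _ = (Ev x).indicator (fun _ => (((2 * nrm x + 1) ^ 2 : ℕ) : ENNReal)) ω := by
        rw [Set.indicator_of_mem hx]
    _ ≤ Nn ω := ENNReal.le_tsum x

/-- there is a universal constant `α > 0` such that for Bernoulli
site percolation on `ℤ²` with parameter `p ≥ 8/9` (the measure `μ` being
characterized by the i.i.d. cylinder condition `hμ`), the expected size of the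
component `G` of the complement of the infinite cluster containing the origin
satisfies `E|G| ≤ α(1−p)`. -/
theorem expected_component_size_bound :
    ∃ α : ℝ, 0 < α ∧
      ∀ (p : ℝ), 8 / 9 ≤ p → p ≤ 1 →
        ∀ (μ : Measure ((ℤ × ℤ) → Bool)), IsProbabilityMeasure μ →
          (∀ (F : Finset (ℤ × ℤ)) (b : (ℤ × ℤ) → Bool),
            μ {ω | ∀ x ∈ F, ω x = b x} =
              ENNReal.ofReal (∏ x ∈ F, if b x then p else 1 - p)) →
          ∫⁻ ω, (CompOfOrigin ω).encard ∂μ ≤ ENNReal.ofReal (α * (1 - p)) := by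
  have hs : 0 ≤ ∑' x : ℤ × ℤ, wt x.1 * wt x.2 :=
    tsum_nonneg (fun x => mul_nonneg (wt_nonneg _) (wt_nonneg _))
  refine ⟨(∑' x : ℤ × ℤ, wt x.1 * wt x.2) + 1, by linarith, ?_⟩
  intro p hp0 hp μ _ hμ
  refine (lintegral_mono comp_le_Nn).trans ((lintegral_Nn hp0 hp μ hμ).trans ?_)
  apply ENNReal.ofReal_le_ofReal
  nlinarith

end
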